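/- Let E be a complex Hilbert space, A a bounded linear operator on E with ‖A‖ ≤ 1, and b ∈ E. Suppose v ∈ E satisfies (I − A*A)^{1/2} v = A*b and v lies in the closure of the range of (I − A*A)^{1/2} (so v is the minimal-norm solution). Define φ(z) = Az + b. Then M₀ = exp(½‖v‖² + ½‖b‖²) is the least M > 0 for which the kernel Φ_M(z,w) = M²·exp(⟨z,w⟩) − exp(⟨φ(z),φ(w)⟩) is positive semi-definite on E; that is, Φ_{M₀} is positive semi-definite, and every M > 0 for which Φ_M is positive semi-definite satisfies M ≥ M₀. (Equivalently, the norm of the composition operator C_φ on the Segal–Bargmann space over E equals exp(½‖v‖² + ½‖b‖²).) -/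

import Mathlib

open scoped InnerProductSpace ComplexOrder
open ContinuousLinearMap

/-- A function `Φ : X × X → ℂ` is a positive semi-definite kernel if for all finite families
of points `x j` and complex numbers `c j`, the sum `∑_{j,l} c j * conj (c l) * Φ (x l) (x j)`
is a nonnegative real number (expressed via the partial order on `ℂ`). -/
def IsPSDKernel {X : Type*} (Φ : X → X → ℂ) : Prop :=
  ∀ (m : ℕ) (x : Fin m → X) (c : Fin m → ℂ),
    0 ≤ ∑ j : Fin m, ∑ l : Fin m, c j * (starRingEnd ℂ) (c l) * Φ (x l) (x j)

/-- A bounded operator is positive: self-adjoint and with nonnegative quadratic form. -/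
def IsPosOp {E : Type*} [NormedAddCommGroup E] [InnerProductSpace ℂ E]
    (T : E →L[ℂ] E) : Prop :=
  (∀ x y : E, ⟪T x, y⟫_ℂ = ⟪x, T y⟫_ℂ) ∧ ∀ x : E, 0 ≤ ⟪T x, x⟫_ℂ

/-- `S` is the (unique) positive square root of `T`. -/
def IsPosSqrtOf {E : Type*} [NormedAddCommGroup E] [InnerProductSpace ℂ E]
    (S T : E →L[ℂ] E) : Prop :=
  IsPosOp S ∧ S ∘L S = T

/-!
The operator `z ↦ (A z, S z)` is an isometry because `A*A + S² = 1`, and `S v = A*b` makes the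
cross terms of the two shifts cancel, so

  `⟪A w + b, A z + b⟫ + ⟪S w - v, S z - v⟫ = ⟪w, z⟫ + ‖v‖² + ‖b‖²`.

Hence `e^{‖v‖² + ‖b‖²} e^{⟪w, z⟫} - e^{⟪A w + b, A z + b⟫}` is the product of the positive kernel
`e^{⟪A w + b, A z + b⟫}` with `e^{⟪S w - v, S z - v⟫} - 1`, a power series with nonnegative
coefficients in a Gram kernel, and is positive by the Schur product theorem. Conversely, on the
diagonal positivity of `Φ_M` says `e^{‖v‖² + ‖b‖² - ‖S z - v‖²} ≤ M²`, and `S z` can be taken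
arbitrarily close to `v`.
-/

section PosSemidef

variable {n 𝕜 : Type*} [RCLike 𝕜]

theorem posSemidef_of_hasSum {ι : Type*} {P : ι → Matrix n n 𝕜} {L : Matrix n n 𝕜}
    (hP : ∀ k, (P k).PosSemidef) (hL : ∀ i j, HasSum (fun k => P k i j) (L i j)) :
    L.PosSemidef := by
  refine ⟨Matrix.IsHermitian.ext fun i j => ?_, fun x => ?_⟩
  · have hstar : HasSum (fun k => P k i j) (star (L j i)) := by
      simpa only [(hP _).isHermitian.apply] using (hL j i).star
    exact hstar.unique (hL i j)
  · have hform : HasSum (fun k => x.sum fun i xi => x.sum fun j xj => star xi * P k i j * xj)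
        (x.sum fun i xi => x.sum fun j xj => star xi * L i j * xj) :=
      hasSum_sum fun i _ => hasSum_sum fun j _ => ((hL i j).mul_left _).mul_right _
    exact hform.nonneg fun k => (hP k).2 x

theorem posSemidef_map_pow [Finite n] {G : Matrix n n 𝕜} (hG : G.PosSemidef) (k : ℕ) :
    (G.map (· ^ k)).PosSemidef := by
  induction k with
  | zero =>
    have hones : G.map (· ^ 0) = Matrix.gram 𝕜 fun _ : n => (1 : 𝕜) := by
      ext i j
      simp [Matrix.gram]
    exact hones ▸ Matrix.posSemidef_gram 𝕜 _
  | succ k ih =>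
    have hsucc : G.map (· ^ (k + 1)) = (G.map (· ^ k)).hadamard G := by
      ext i j
      simp [pow_succ]
    exact hsucc ▸ ih.hadamard hG

theorem posSemidef_map_of_hasSum_pow [Finite n] {G : Matrix n n 𝕜} (hG : G.PosSemidef)
    {a : ℕ → 𝕜} (ha : ∀ k, 0 ≤ a k) {f : 𝕜 → 𝕜}
    (hf : ∀ i j, HasSum (fun k => a k * G i j ^ k) (f (G i j))) :
    (G.map f).PosSemidef :=
  posSemidef_of_hasSum (fun k => (posSemidef_map_pow hG k).smul (ha k)) hf

theorem posSemidef_map_mul_exp_sub [Finite n] {G : Matrix n n ℂ} (hG : G.PosSemidef)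
    {r s : ℂ} (hs : 0 ≤ s) (hrs : r ≤ s) : (G.map fun t => s * Complex.exp t - r).PosSemidef := by
  let a : ℕ → ℂ := fun k => s / k.factorial - if k = 0 then r else 0
  refine posSemidef_map_of_hasSum_pow hG (a := a) (fun k => ?_) fun i j => ?_
  · rcases k with _ | k
    · simpa [a] using hrs
    · simpa [a] using div_nonneg hs (Nat.cast_nonneg _)
  · have hexp := (NormedSpace.expSeries_div_hasSum_exp (G i j)).mul_left s
    rw [← Complex.exp_eq_exp_ℂ] at hexp
    refine (hexp.sub (hasSum_ite_eq 0 r)).congr_fun fun k => ?_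
    rcases k with _ | k
    · simp [a]
    · simp only [a, Nat.add_eq_zero_iff, one_ne_zero, and_false, if_false]
      ring

theorem posSemidef_map_exp [Finite n] {G : Matrix n n ℂ} (hG : G.PosSemidef) :
    (G.map Complex.exp).PosSemidef := by
  simpa using posSemidef_map_mul_exp_sub hG zero_le_one zero_le_one

end PosSemidef

section Kernel

variable {X F G : Type*} [NormedAddCommGroup F] [InnerProductSpace ℂ F]
  [NormedAddCommGroup G] [InnerProductSpace ℂ G]

theorem isPSDKernel_of_forall_posSemidef {Φ : X → X → ℂ}
    (hΦ : ∀ (m : ℕ) (x : Fin m → X), (Matrix.of fun j l => Φ (x l) (x j)).PosSemidef) :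
    IsPSDKernel Φ := by
  intro m x c
  refine ((hΦ m x).dotProduct_mulVec_nonneg (star c)).trans_eq ?_
  simp only [dotProduct, Matrix.mulVec, Finset.mul_sum]
  refine Finset.sum_congr rfl fun j _ => Finset.sum_congr rfl fun l _ => ?_
  simp only [Pi.star_apply, star_star, Matrix.of_apply, starRingEnd_apply]
  ring

theorem IsPSDKernel.apply_self_nonneg {Φ : X → X → ℂ} (hΦ : IsPSDKernel Φ) (z : X) :
    0 ≤ Φ z z := by
  simpa using hΦ 1 (fun _ => z) fun _ => 1

variable {p : X → F} {q : X → G} {k : X → X → ℂ} {C t : ℝ}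

theorem isPSDKernel_mul_exp_sub_exp_inner
    (hpq : ∀ z w, ⟪p w, p z⟫_ℂ + ⟪q w, q z⟫_ℂ = k z w + C) (ht : Real.exp C ≤ t) :
    IsPSDKernel fun z w => t * Complex.exp (k z w) - Complex.exp ⟪p w, p z⟫_ℂ := by
  have hone_le : (1 : ℂ) ≤ (t * Real.exp (-C) : ℝ) := by
    rw [Real.exp_neg, ← div_eq_mul_inv]
    exact_mod_cast (one_le_div (Real.exp_pos C)).2 ht
  have hfactor (z w : X) : t * Complex.exp (k z w) - Complex.exp ⟪p w, p z⟫_ℂ =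
      Complex.exp ⟪p w, p z⟫_ℂ *
        ((t * Real.exp (-C) : ℝ) * Complex.exp ⟪q w, q z⟫_ℂ - 1) := by
    have hk : k z w = ⟪p w, p z⟫_ℂ + ((-C : ℝ) + ⟪q w, q z⟫_ℂ) := by
      push_cast
      linear_combination -hpq z w
    simp only [hk, Complex.exp_add, Complex.ofReal_mul, Complex.ofReal_exp]
    ring
  refine isPSDKernel_of_forall_posSemidef fun m x => ?_
  simp only [hfactor]
  exact (posSemidef_map_exp (Matrix.posSemidef_gram ℂ (p ∘ x))).hadamard
    (posSemidef_map_mul_exp_sub (Matrix.posSemidef_gram ℂ (q ∘ x))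
      (zero_le_one.trans hone_le) hone_le)

theorem exp_sub_norm_sq_le_of_isPSDKernel
    (hpq : ∀ z w, ⟪p w, p z⟫_ℂ + ⟪q w, q z⟫_ℂ = k z w + C)
    (hΦ : IsPSDKernel fun z w => t * Complex.exp (k z w) - Complex.exp ⟪p w, p z⟫_ℂ) (z : X) :
    Real.exp (C - ‖q z‖ ^ 2) ≤ t := by
  have hk : k z z = ((‖p z‖ ^ 2 + (‖q z‖ ^ 2 - C) : ℝ) : ℂ) := by
    have := hpq z z
    simp only [inner_self_eq_norm_sq_to_K, Complex.coe_algebraMap] at this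
    push_cast
    linear_combination -this
  have hdiag : Real.exp (‖p z‖ ^ 2) ≤ t * Real.exp (‖p z‖ ^ 2 + (‖q z‖ ^ 2 - C)) := by
    have := hΦ.apply_self_nonneg z
    simp only [hk, inner_self_eq_norm_sq_to_K, Complex.coe_algebraMap] at this
    exact_mod_cast sub_nonneg.1 this
  rw [Real.exp_add, mul_left_comm, le_mul_iff_one_le_right (Real.exp_pos _)] at hdiag
  rwa [← neg_sub, Real.exp_neg, inv_le_iff_one_le_mul₀ (Real.exp_pos _)]

theorem isPSDKernel_mul_exp_sub_exp_inner_iff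
    (hpq : ∀ z w, ⟪p w, p z⟫_ℂ + ⟪q w, q z⟫_ℂ = k z w + C) (hq : 0 ∈ closure (Set.range q)) :
    (IsPSDKernel fun z w => t * Complex.exp (k z w) - Complex.exp ⟪p w, p z⟫_ℂ) ↔
      Real.exp C ≤ t := by
  refine ⟨fun hΦ => ?_, isPSDKernel_mul_exp_sub_exp_inner hpq⟩
  have hclosed : IsClosed {y : G | Real.exp (C - ‖y‖ ^ 2) ≤ t} :=
    isClosed_le (by fun_prop) continuous_const
  have hrange : Set.range q ⊆ {y : G | Real.exp (C - ‖y‖ ^ 2) ≤ t} :=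
    Set.range_subset_iff.2 (exp_sub_norm_sq_le_of_isPSDKernel hpq hΦ)
  simpa using closure_minimal hrange hclosed hq

end Kernel

section Isometry

variable {𝕜 E F G : Type*} [RCLike 𝕜] [NormedAddCommGroup E] [InnerProductSpace 𝕜 E]
  [NormedAddCommGroup F] [InnerProductSpace 𝕜 F] [NormedAddCommGroup G] [InnerProductSpace 𝕜 G]
  {A : E →ₗ[𝕜] F} {S : E →ₗ[𝕜] G} {b : F} {v : G}

theorem inner_map_add_inner_map_of_norm_sq (hAS : ∀ z, ‖A z‖ ^ 2 + ‖S z‖ ^ 2 = ‖z‖ ^ 2)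
    (w z : E) : ⟪A w, A z⟫_𝕜 + ⟪S w, S z⟫_𝕜 = ⟪w, z⟫_𝕜 := by
  have hnorm (x : E) : (‖A x‖ : 𝕜) ^ 2 + (‖S x‖ : 𝕜) ^ 2 = (‖x‖ : 𝕜) ^ 2 := by
    exact_mod_cast congrArg (RCLike.ofReal (K := 𝕜)) (hAS x)
  simp only [inner_eq_sum_norm_sq_div_four, ← map_smul, ← map_add, ← map_sub, ← hnorm]
  ring

theorem inner_add_add_inner_sub_of_norm_sq (hAS : ∀ z, ‖A z‖ ^ 2 + ‖S z‖ ^ 2 = ‖z‖ ^ 2)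
    (hv : ∀ z, ⟪S z, v⟫_𝕜 = ⟪A z, b⟫_𝕜) (w z : E) :
    ⟪A w + b, A z + b⟫_𝕜 + ⟪S w - v, S z - v⟫_𝕜 =
      ⟪w, z⟫_𝕜 + ((‖v‖ ^ 2 + ‖b‖ ^ 2 : ℝ) : 𝕜) := by
  have hv_conj : ⟪v, S z⟫_𝕜 = ⟪b, A z⟫_𝕜 := by rw [← inner_conj_symm, hv, inner_conj_symm]
  simp only [inner_add_left, inner_add_right, inner_sub_left, inner_sub_right, hv, hv_conj,
    inner_self_eq_norm_sq_to_K, ← inner_map_add_inner_map_of_norm_sq hAS]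
  push_cast
  ring

end Isometry

section SquareRoot

variable {E F : Type*} [NormedAddCommGroup E] [InnerProductSpace ℂ E]
  [NormedAddCommGroup F] [InnerProductSpace ℂ F]

theorem IsPosSqrtOf.norm_sq_apply {S T : E →L[ℂ] E} (hS : IsPosSqrtOf S T) (z : E) :
    ‖S z‖ ^ 2 = RCLike.re ⟪z, T z⟫_ℂ := by
  rw [← inner_self_eq_norm_sq (𝕜 := ℂ), hS.1.1, ← hS.2, comp_apply]

theorem IsPosSqrtOf.norm_sq_add_norm_sq [CompleteSpace E] [CompleteSpace F] {A : E →L[ℂ] F}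
    {S : E →L[ℂ] E} (hS : IsPosSqrtOf S (1 - adjoint A ∘L A)) (z : E) :
    ‖A z‖ ^ 2 + ‖S z‖ ^ 2 = ‖z‖ ^ 2 := by
  rw [hS.norm_sq_apply, apply_norm_sq_eq_inner_adjoint_right, sub_apply, one_apply_eq_self,
    inner_sub_right, map_sub, inner_self_eq_norm_sq, add_sub_cancel]

end SquareRoot

theorem statement1_general {E F G : Type*} [NormedAddCommGroup E] [InnerProductSpace ℂ E]
    [NormedAddCommGroup F] [InnerProductSpace ℂ F] [NormedAddCommGroup G] [InnerProductSpace ℂ G]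
    (A : E →ₗ[ℂ] F) (S : E →ₗ[ℂ] G) (hAS : ∀ z, ‖A z‖ ^ 2 + ‖S z‖ ^ 2 = ‖z‖ ^ 2)
    {b : F} {v : G} (hv : ∀ z, ⟪S z, v⟫_ℂ = ⟪A z, b⟫_ℂ) (hv' : v ∈ closure (Set.range S))
    {M : ℝ} (hM : 0 ≤ M) :
    IsPSDKernel (fun z w : E =>
        (M : ℂ) ^ 2 * Complex.exp ⟪w, z⟫_ℂ - Complex.exp ⟪A w + b, A z + b⟫_ℂ) ↔
      Real.exp (‖v‖ ^ 2 / 2 + ‖b‖ ^ 2 / 2) ≤ M := by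
  have hzero : (0 : G) ∈ closure (Set.range fun z => S z - v) := by
    have hsub : Set.MapsTo (· - v) (Set.range S) (Set.range fun z => S z - v) := by
      rintro _ ⟨z, rfl⟩
      exact ⟨z, rfl⟩
    simpa using map_mem_closure (continuous_sub_right v) hv' hsub
  have hsq : Real.exp (‖v‖ ^ 2 + ‖b‖ ^ 2) = Real.exp (‖v‖ ^ 2 / 2 + ‖b‖ ^ 2 / 2) ^ 2 := by
    rw [← Real.exp_nat_mul]
    ring_nf
  have hkernel := isPSDKernel_mul_exp_sub_exp_inner_iff (t := M ^ 2)
    (fun z w => inner_add_add_inner_sub_of_norm_sq hAS hv w z) hzero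
  rw [← pow_le_pow_iff_left₀ (Real.exp_pos _).le hM two_ne_zero, ← hsq, ← Complex.ofReal_pow]
  exact hkernel

/-- with `φ z = A z + b`, `‖A‖ ≤ 1`, `S = (I − A*A)^{1/2}`, and `v` the
minimal-norm solution of `S v = A* b` (i.e. `v` in the closure of the range of `S`),
`M₀ = exp(½‖v‖² + ½‖b‖²)` is the least `M > 0` for which
`Φ_M(z,w) = M² exp⟨z,w⟩ − exp⟨φ z, φ w⟩` is positive semi-definite; equivalently
`‖C_φ‖ = exp(½‖v‖² + ½‖b‖²)`. -/
theorem statement1 {E : Type*} [NormedAddCommGroup E] [InnerProductSpace ℂ E]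
    [CompleteSpace E] (A : E →L[ℂ] E) (hA : ‖A‖ ≤ 1) (b v : E)
    (S : E →L[ℂ] E) (hS : IsPosSqrtOf S (1 - (adjoint A) ∘L A))
    (hv : S v = adjoint A b) (hv' : v ∈ closure (Set.range ⇑S)) :
    IsPSDKernel (fun z w : E =>
        (Real.exp (‖v‖ ^ 2 / 2 + ‖b‖ ^ 2 / 2) : ℂ) ^ 2 * Complex.exp ⟪w, z⟫_ℂ -
          Complex.exp ⟪A w + b, A z + b⟫_ℂ) ∧
    ∀ M : ℝ, 0 < M →
      IsPSDKernel (fun z w : E =>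
        (M : ℂ) ^ 2 * Complex.exp ⟪w, z⟫_ℂ - Complex.exp ⟪A w + b, A z + b⟫_ℂ) →
      Real.exp (‖v‖ ^ 2 / 2 + ‖b‖ ^ 2 / 2) ≤ M := by
  have hSv (z : E) : ⟪S z, v⟫_ℂ = ⟪A z, b⟫_ℂ := by rw [hS.1.1, hv, adjoint_inner_right]
  have hiff {M : ℝ} := statement1_general (A : E →ₗ[ℂ] E) (S : E →ₗ[ℂ] E)
    hS.norm_sq_add_norm_sq hSv hv' (M := M)
  exact ⟨(hiff (Real.exp_pos _).le).2 le_rfl, fun _ hM => (hiff hM.le).1⟩
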